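/- arXiv:1406.7098 — 3 statements merged into one kernel-verified Lean document; each statement's English description precedes it below -/
import Mathlib

section
/- Let σ be a permutation of Fin n with no fixed points, and let E be the side-information digraph with E i j if and only if j = σ i (single-uniprior, single-unicast side information: each client i has exactly the one message σ i). Then the minimal index code length satisfies ℓ*(E) = n − ξ, where ξ is the number of cycles of σ. -/
/-- A matrix `A` over `ZMod 2` fits the side-information digraph `E` if it has ones on the
diagonal and zeros at all off-diagonal non-edge positions. -/
def Fits {n : ℕ} (E : Fin n → Fin n → Prop) (A : Matrix (Fin n) (Fin n) (ZMod 2)) : Prop :=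
  (∀ i, A i i = 1) ∧ ∀ i j, i ≠ j → ¬E i j → A i j = 0

/-- `minrk₂` of a side-information digraph: the minimum `ZMod 2` rank over matrices fitting it. -/
noncomputable def minrk2 {n : ℕ} (E : Fin n → Fin n → Prop) : ℕ :=
  sInf {r : ℕ | ∃ A : Matrix (Fin n) (Fin n) (ZMod 2), Fits E A ∧ A.rank = r}

/-- `Enc` is (the encoding map of) an index code of length `ℓ` for the side-information
digraph `E`: every client `i` can decode `x i` from the encoded word and the restriction of
`x` to its side information `{j | E i j}`. -/
def IsIndexCode {n ℓ : ℕ} (E : Fin n → Fin n → Prop)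
    (Enc : (Fin n → ZMod 2) → (Fin ℓ → ZMod 2)) : Prop :=
  ∃ Dec : (i : Fin n) → (Fin ℓ → ZMod 2) → ({j : Fin n // E i j} → ZMod 2) → ZMod 2,
    ∀ (x : Fin n → ZMod 2) (i : Fin n), Dec i (Enc x) (fun j => x j.1) = x i

/-- There is an index code of length `ℓ` for `E`. -/
def HasIndexCode {n : ℕ} (E : Fin n → Fin n → Prop) (ℓ : ℕ) : Prop :=
  ∃ Enc : (Fin n → ZMod 2) → (Fin ℓ → ZMod 2), IsIndexCode E Enc

/-- There is a linear index code of length `ℓ` for `E`. -/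
def HasLinearIndexCode {n : ℕ} (E : Fin n → Fin n → Prop) (ℓ : ℕ) : Prop :=
  ∃ Enc : (Fin n → ZMod 2) → (Fin ℓ → ZMod 2),
    IsLinearMap (ZMod 2) Enc ∧ IsIndexCode E Enc

/-- The minimal index code length `ℓ*(E)`. -/
noncomputable def minIndexCodeLength {n : ℕ} (E : Fin n → Fin n → Prop) : ℕ :=
  sInf {ℓ : ℕ | HasIndexCode E ℓ}

/-- A directed cycle of `E`: a list of at least two distinct vertices with an edge from each
vertex to the cyclically next one. -/
def IsDirCycle {n : ℕ} (E : Fin n → Fin n → Prop) (c : List (Fin n)) : Prop :=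
  2 ≤ c.length ∧ c.Nodup ∧
    ∀ t : Fin c.length,
      E (c.get t) (c.get ⟨(t.1 + 1) % c.length, Nat.mod_lt _ t.pos⟩)

/-- The setoid on `Fin n` given by the `SameCycle` relation of a permutation. -/
def sameCycleSetoid {n : ℕ} (σ : Equiv.Perm (Fin n)) : Setoid (Fin n) :=
  ⟨σ.SameCycle, ⟨fun x => Equiv.Perm.SameCycle.refl σ x, fun h => h.symm,
    fun h₁ h₂ => h₁.trans h₂⟩⟩

/-- The number of cycles of a permutation: the number of equivalence classes of its
`SameCycle` relation. -/
noncomputable def numCycles {n : ℕ} (σ : Equiv.Perm (Fin n)) : ℕ :=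
  Nat.card (Quotient (sameCycleSetoid σ))

/-!
Upper bound: every client `i` only needs `x (σ i) - x i`, so it suffices to broadcast the image of
`x` under `x ↦ x ∘ σ - x`. The kernel of this linear map consists of the messages constant on the
cycles of `σ`, so its rank is `n - ξ`.

Lower bound: delete one client from each cycle, leaving an acyclic digraph on `n - ξ` clients. If
all deleted messages are zero, the remaining ones can be decoded from the codeword alone, following
the digraph back from its sinks; hence `2 ^ (n - ξ) ≤ 2 ^ ℓ`.
-/

section IndexCodes

variable {n ℓ : ℕ} {E : Fin n → Fin n → Prop} {Enc : (Fin n → ZMod 2) → (Fin ℓ → ZMod 2)}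

theorem isIndexCode_iff :
    IsIndexCode E Enc ↔
      ∀ x y i, Enc x = Enc y → (∀ j, E i j → x j = y j) → x i = y i := by
  constructor
  · rintro ⟨Dec, hDec⟩ x y i hEnc hside
    have hside' : (fun j : {j // E i j} => x j.1) = fun j => y j.1 :=
      funext fun j => hside j.1 j.2
    rw [← hDec x i, ← hDec y i, hEnc, hside']
  · intro h
    let received (i : Fin n) (x : Fin n → ZMod 2) := (Enc x, fun j : {j // E i j} => x j.1)
    have hfactor (i : Fin n) : (fun x : Fin n → ZMod 2 => x i).FactorsThrough (received i) :=
      fun x y hxy => h x y i (congrArg Prod.fst hxy) fun j hj =>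
        congrFun (congrArg Prod.snd hxy) ⟨j, hj⟩
    exact ⟨fun i c s => Function.extend (received i) (fun x => x i) 0 (c, s),
      fun x i => (hfactor i).extend_apply 0 x⟩

theorem hasIndexCode_finrank_range {V : Type*} [AddCommGroup V] [Module (ZMod 2) V]
    (L : (Fin n → ZMod 2) →ₗ[ZMod 2] V)
    (hL : ∀ x ∈ L.ker, ∀ i, (∀ j, E i j → x j = 0) → x i = 0) :
    HasIndexCode E (Module.finrank (ZMod 2) L.range) := by
  let coords := (Module.finBasis (ZMod 2) L.range).equivFun
  refine ⟨fun x => coords (L.rangeRestrict x), isIndexCode_iff.2 fun x y i hEnc hside => ?_⟩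
  have hLxy : L x = L y := congrArg Subtype.val (coords.injective hEnc)
  have hker : x - y ∈ L.ker := LinearMap.sub_mem_ker_iff.2 hLxy
  exact sub_eq_zero.1 (hL (x - y) hker i fun j hj => sub_eq_zero.2 (hside j hj))

theorem IsIndexCode.card_le_of_wellFounded (h : IsIndexCode E Enc) {S : Set (Fin n)}
    (hS : WellFounded fun j i : S => E i j) : Nat.card S ≤ ℓ := by
  let extendZero (z : S → ZMod 2) : Fin n → ZMod 2 :=
    Function.extend (Subtype.val : S → Fin n) z 0
  have extendZero_mem (z : S → ZMod 2) (i : S) : extendZero z i = z i :=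
    Subtype.val_injective.extend_apply z 0 i
  have extendZero_notMem (z : S → ZMod 2) {j : Fin n} (hj : j ∉ S) : extendZero z j = 0 :=
    Function.extend_apply' z (0 : Fin n → ZMod 2) j fun ⟨i, hi⟩ => hj (hi ▸ i.2)
  have hinj : Function.Injective fun z => Enc (extendZero z) := by
    intro z w hzw
    funext i
    induction i using hS.induction with
    | _ i ih =>
      rw [← extendZero_mem z i, ← extendZero_mem w i]
      refine isIndexCode_iff.1 h _ _ i hzw fun j hij => ?_
      by_cases hj : j ∈ S
      · simpa only [extendZero_mem _ ⟨j, hj⟩] using ih ⟨j, hj⟩ hij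
      · rw [extendZero_notMem z hj, extendZero_notMem w hj]
  have hcard : 2 ^ Nat.card S ≤ 2 ^ ℓ := by
    simpa only [Nat.card_fun, Nat.card_zmod, Nat.card_fin] using
      Nat.card_le_card_of_injective _ hinj
  exact (Nat.pow_le_pow_iff_right one_lt_two).1 hcard

end IndexCodes

section Cycles

variable {α : Type*}

theorem wellFounded_eq_apply_compl {f : α → α} {T : Set α} (hT : ∀ i, ∃ k, f^[k] i ∈ T) :
    WellFounded fun j i : ↥Tᶜ => (j : α) = f i := by
  have acc_of_iterate_mem (k : ℕ) :
      ∀ i : ↥Tᶜ, f^[k] i ∈ T → Acc (fun j i : ↥Tᶜ => (j : α) = f i) i := by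
    induction k with
    | zero => exact fun i hi => absurd hi i.2
    | succ k ih => exact fun i hi => ⟨i, fun j hj => ih j (hj ▸ hi)⟩
  exact ⟨fun i => (hT i).elim fun k hk => acc_of_iterate_mem k i hk⟩

variable (σ : Equiv.Perm α)

theorem comp_perm_eq_self_iff {β : Type*} {x : α → β} :
    x ∘ σ = x ↔ ∀ i j, σ.SameCycle i j → x i = x j := by
  constructor
  · rintro h i _ ⟨k, rfl⟩
    have hσ (j : α) : x (σ j) = x j := congrFun h j
    induction k with
    | zero => rfl
    | succ k ih => rw [ih, add_comm, zpow_one_add, Equiv.Perm.mul_apply, hσ]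
    | pred k ih =>
      rw [ih, ← hσ ((σ ^ (-(k : ℤ) - 1)) i), ← Equiv.Perm.mul_apply, ← zpow_one_add,
        add_sub_cancel]
  · exact fun h => funext fun i => h _ _ (Equiv.Perm.sameCycle_apply_left.2 (.refl σ i))

variable [Finite α]

theorem exists_iterate_mem_range_out (i : α) :
    ∃ k, σ^[k] i ∈ Set.range (Quotient.out (s := Equiv.Perm.SameCycle.setoid σ)) := by
  have hcycle : σ.SameCycle i (Quotient.mk (Equiv.Perm.SameCycle.setoid σ) i).out :=
    (Quotient.mk_out (s := Equiv.Perm.SameCycle.setoid σ) i).symm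
  obtain ⟨k, hk⟩ := hcycle.exists_nat_pow_eq
  exact ⟨k, _, by rw [← hk, Equiv.Perm.iterate_eq_pow]⟩

theorem finrank_ker_funLeft_sub_id (R : Type*) [Ring R] [StrongRankCondition R] :
    Module.finrank R (LinearMap.funLeft R R σ - LinearMap.id).ker =
      Nat.card (Quotient (Equiv.Perm.SameCycle.setoid σ)) := by
  let pullback :=
    LinearMap.funLeft R R (Quotient.mk (Equiv.Perm.SameCycle.setoid σ))
  have hinj : Function.Injective pullback :=
    LinearMap.funLeft_injective_of_surjective R R _ Quotient.mk_surjective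
  have hrange : (LinearMap.funLeft R R σ - LinearMap.id).ker = pullback.range := by
    ext x
    have hker : x ∈ (LinearMap.funLeft R R σ - LinearMap.id).ker ↔ x ∘ σ = x := sub_eq_zero
    rw [hker, comp_perm_eq_self_iff]
    constructor
    · exact fun hx => ⟨Quotient.lift x hx, rfl⟩
    · rintro ⟨y, rfl⟩ i j hij
      exact congrArg y (Quotient.sound hij)
  have := Fintype.ofFinite (Quotient (Equiv.Perm.SameCycle.setoid σ))
  rw [hrange, LinearMap.finrank_range_of_inj hinj, Module.finrank_fintype_fun_eq_card,
    Nat.card_eq_fintype_card]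

end Cycles

section SingleUniprior

variable {n : ℕ} (σ : Equiv.Perm (Fin n))

theorem hasIndexCode_singleUniprior :
    HasIndexCode (fun i j : Fin n => j = σ i) (n - numCycles σ) := by
  let L := LinearMap.funLeft (ZMod 2) (ZMod 2) σ - LinearMap.id
  have hker : Module.finrank (ZMod 2) L.ker = numCycles σ :=
    finrank_ker_funLeft_sub_id σ (ZMod 2)
  have hrank : Module.finrank (ZMod 2) L.range = n - numCycles σ := by
    have hnullity := L.finrank_range_add_finrank_ker
    rw [hker, Module.finrank_fin_fun] at hnullity
    lia
  rw [← hrank]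
  refine hasIndexCode_finrank_range L fun x hx i hside => ?_
  have hfixed : x (σ i) - x i = 0 := congrFun hx i
  rw [← sub_eq_zero.1 hfixed]
  exact hside (σ i) rfl

theorem le_of_hasIndexCode_singleUniprior {ℓ : ℕ}
    (h : HasIndexCode (fun i j : Fin n => j = σ i) ℓ) : n - numCycles σ ≤ ℓ := by
  obtain ⟨Enc, hEnc⟩ := h
  let reps : Set (Fin n) := Set.range (Quotient.out (s := sameCycleSetoid σ))
  have hreps : reps.ncard = numCycles σ := Nat.card_range_of_injective Quotient.out_injective
  have hcompl : Nat.card ↥repsᶜ = n - numCycles σ := by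
    rw [Nat.card_coe_set_eq, Set.ncard_compl, hreps, Nat.card_fin]
  rw [← hcompl]
  exact hEnc.card_le_of_wellFounded
    (wellFounded_eq_apply_compl (exists_iterate_mem_range_out σ))

theorem minIndexCodeLength_singleUniprior_general :
    minIndexCodeLength (fun i j : Fin n => j = σ i) = n - numCycles σ :=
  IsLeast.csInf_eq
    ⟨hasIndexCode_singleUniprior σ, fun _ h => le_of_hasIndexCode_singleUniprior σ h⟩

end SingleUniprior

/-- Single-uniprior, single-unicast side information: client `i` has exactly the one message
`σ i`, for a fixed-point-free permutation `σ`. The minimal index code length is `n - ξ`,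
where `ξ` is the number of cycles of `σ`. -/
theorem minIndexCodeLength_singleUniprior
    (n : ℕ) (hn : 1 ≤ n) (σ : Equiv.Perm (Fin n)) (hfix : ∀ i : Fin n, σ i ≠ i) :
    minIndexCodeLength (fun i j : Fin n => j = σ i) = n - numCycles σ :=
  minIndexCodeLength_singleUniprior_general σ
end

section
/- Let E be a side-information digraph on Fin n. Then minrk₂(E) = n if and only if E contains no directed cycle. -/
/-!
The support of a kernel vector of a matrix fitting `E` is a set in which every vertex has an
out-neighbour other than itself: for a vertex of the support without one, the corresponding entry
of the product would reduce to its nonzero diagonal term. Conversely, given a nonempty set `S` and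
a choice of out-neighbours `f : S → S`, subtracting `1` from the entries `(i, f i)`, `i ∈ S`, of
the identity gives a fitting matrix that kills the indicator vector of `S`. In a finite digraph
such a set exists if and only if a directed cycle does, because iterating `f` eventually repeats.
-/

section Digraph

variable {V : Type*} {E : V → V → Prop} {S : Set V}

/-- A directed cycle of a relation on an arbitrary vertex type, encoded as in `IsDirCycle`: a list
of at least two distinct vertices, each with an edge to the cyclically next one. -/
def IsDirectedCycle (E : V → V → Prop) (c : List V) : Prop :=
  2 ≤ c.length ∧ c.Nodup ∧
    ∀ t : Fin c.length,
      E (c.get t) (c.get ⟨(t.1 + 1) % c.length, Nat.mod_lt _ t.pos⟩)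

/-- A nonempty vertex set inducing a subgraph without sinks. Loops are disregarded: the
out-neighbour of a vertex must differ from it. This is the combinatorial counterpart of the support
of a kernel vector. -/
def IsSinkless (E : V → V → Prop) (S : Set V) : Prop :=
  S.Nonempty ∧ ∀ i ∈ S, ∃ j ∈ S, i ≠ j ∧ E i j

theorem IsDirectedCycle.isSinkless {c : List V} (hc : IsDirectedCycle E c) :
    IsSinkless E {v | v ∈ c} := by
  obtain ⟨hlen, hnodup, hedge⟩ := hc
  refine ⟨List.exists_mem_of_length_pos (by omega), fun i hi => ?_⟩
  obtain ⟨t, rfl⟩ := List.get_of_mem hi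
  refine ⟨_, List.get_mem _ _, fun heq => ?_, hedge t⟩
  have hfix : t.1 = (t.1 + 1) % c.length := congrArg Fin.val (hnodup.injective_get heq)
  rcases (show t.1 + 1 ≤ c.length from t.2).lt_or_eq with hlt | hlast
  · rw [Nat.mod_eq_of_lt hlt] at hfix
    omega
  · rw [hlast, Nat.mod_self] at hfix
    omega

theorem exists_mem_periodicPts_of_mapsTo {f : V → V} (hfin : S.Finite) (hne : S.Nonempty)
    (hf : Set.MapsTo f S S) : ∃ x ∈ S, x ∈ Function.periodicPts f := by
  obtain ⟨x, hx⟩ := hne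
  obtain ⟨a, -, b, -, hab, heq⟩ := Set.infinite_univ.exists_lt_map_eq_of_mapsTo
    (f := fun k : ℕ => f^[k] x) (fun k _ => hf.iterate k hx) hfin
  refine ⟨f^[a] x, hf.iterate a hx, Function.mk_mem_periodicPts (Nat.sub_pos_of_lt hab) ?_⟩
  calc f^[b - a] (f^[a] x) = f^[b] x := by
        rw [← Function.iterate_add_apply, Nat.sub_add_cancel hab.le]
    _ = f^[a] x := heq.symm

theorem isDirectedCycle_map_iterate {f : V → V} {x : V} (hx : x ∈ Function.periodicPts f)
    (hfx : f x ≠ x) (hedge : ∀ k, E (f^[k] x) (f^[k + 1] x)) :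
    IsDirectedCycle E ((List.range (Function.minimalPeriod f x)).map fun k => f^[k] x) := by
  have hpos : 0 < Function.minimalPeriod f x := Function.minimalPeriod_pos_of_mem_periodicPts hx
  have hne : Function.minimalPeriod f x ≠ 1 :=
    fun h => hfx (Function.minimalPeriod_eq_one_iff_isFixedPt.1 h)
  refine ⟨?_, Function.nodup_periodicOrbit, fun t => ?_⟩
  · rw [List.length_map, List.length_range]
    omega
  · simp only [List.get_eq_getElem, List.getElem_map, List.getElem_range, List.length_map,
      List.length_range, Function.iterate_mod_minimalPeriod_eq]
    exact hedge t

theorem IsSinkless.exists_isDirectedCycle (hS : IsSinkless E S) (hfin : S.Finite) :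
    ∃ c : List V, IsDirectedCycle E c := by
  obtain ⟨hne, hout⟩ := hS
  choose! f hfS hfne hfE using hout
  obtain ⟨x, hxS, hx⟩ := exists_mem_periodicPts_of_mapsTo hfin hne hfS
  refine ⟨_, isDirectedCycle_map_iterate hx (hfne x hxS).symm fun k => ?_⟩
  rw [Function.iterate_succ_apply']
  exact hfE _ (Set.MapsTo.iterate hfS k hxS)

theorem exists_isDirectedCycle_iff_exists_isSinkless [Finite V] :
    (∃ c : List V, IsDirectedCycle E c) ↔ ∃ S : Set V, IsSinkless E S :=
  ⟨fun ⟨_, hc⟩ => ⟨_, hc.isSinkless⟩, fun ⟨S, hS⟩ => hS.exists_isDirectedCycle S.toFinite⟩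

end Digraph

section FittingMatrix

variable {V R : Type*} {E : V → V → Prop}

/-- The condition `Fits` for matrices over any coefficients with a zero and a one, indexed by any
vertex type. -/
def IsFitting [Zero R] [One R] (E : V → V → Prop) (A : Matrix V V R) : Prop :=
  (∀ i, A i i = 1) ∧ ∀ i j, i ≠ j → ¬E i j → A i j = 0

theorem isFitting_one [DecidableEq V] [Zero R] [One R] : IsFitting E (1 : Matrix V V R) :=
  ⟨Matrix.one_apply_eq, fun _ _ hij _ => Matrix.one_apply_ne hij⟩

theorem IsFitting.isSinkless_support [Fintype V] [NonAssocSemiring R] {A : Matrix V V R}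
    (hA : IsFitting E A) {v : V → R} (hv : v ≠ 0) (hAv : A.mulVec v = 0) :
    IsSinkless E (Function.support v) := by
  refine ⟨Function.support_nonempty_iff.2 hv, fun i hi => ?_⟩
  by_contra! hsink
  have hterm (j : V) (hji : j ≠ i) : A i j * v j = 0 := by
    by_cases hj : v j = 0
    · rw [hj, mul_zero]
    · rw [hA.2 i j hji.symm (hsink j hj hji.symm), zero_mul]
  refine hi ?_
  calc v i = A i i * v i := by rw [hA.1, one_mul]
    _ = ∑ j, A i j * v j := (Fintype.sum_eq_single i hterm).symm
    _ = 0 := congrFun hAv i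

theorem IsSinkless.exists_isFitting_mulVec_eq_zero [Fintype V] [NonAssocRing R] [Nontrivial R]
    {S : Set V} (hS : IsSinkless E S) :
    ∃ A : Matrix V V R, IsFitting E A ∧ ∃ v ≠ 0, A.mulVec v = 0 := by
  classical
  obtain ⟨⟨x, hx⟩, hout⟩ := hS
  choose! f hfS hfne hfE using hout
  let A : Matrix V V R := 1 - Matrix.of (S.indicator fun i => Pi.single (f i) 1)
  have hA : IsFitting E A := by
    refine ⟨fun i => ?_, fun i j hij hE => ?_⟩
    · by_cases hi : i ∈ S
      · simp [A, hi, hfne i hi]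
      · simp [A, hi]
    · by_cases hi : i ∈ S
      · have hj : j ≠ f i := fun h => hE (h ▸ hfE i hi)
        simp [A, hi, hij, hj]
      · simp [A, hi, hij]
  refine ⟨A, hA, S.indicator 1, fun h => ?_, ?_⟩
  · simpa [hx] using congrFun h x
  · rw [Matrix.sub_mulVec, Matrix.one_mulVec, sub_eq_zero]
    ext i
    by_cases hi : i ∈ S
    · simp [Matrix.mulVec, hi, hfS i hi]
    · simp [Matrix.mulVec, hi]

theorem rank_eq_card_iff_forall_mulVec_eq_zero {m : Type*} [Fintype V] [CommRing R]
    [IsDomain R] (A : Matrix m V R) :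
    A.rank = Fintype.card V ↔ ∀ v, A.mulVec v = 0 → v = 0 := by
  have hnullity : A.rank + Module.finrank R A.mulVecLin.ker = Fintype.card V := by
    rw [Matrix.rank, ← A.mulVecLin.quotKerEquivRange.finrank_eq,
      Submodule.finrank_quotient_add_finrank, Module.finrank_fintype_fun_eq_card]
  calc A.rank = Fintype.card V ↔ Module.finrank R A.mulVecLin.ker = 0 := by omega
    _ ↔ A.mulVecLin.ker = ⊥ := by
        rw [← Submodule.rank_eq_zero, ← Submodule.finrank_eq_rank, Nat.cast_eq_zero]
    _ ↔ ∀ v, A.mulVec v = 0 → v = 0 := LinearMap.ker_eq_bot'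

end FittingMatrix

section Minrank

variable {V : Type*} [Fintype V] (R : Type*) [CommRing R] (E : V → V → Prop)

/-- The minrank of a digraph over an arbitrary commutative ring: the least rank of a matrix
fitting it. The infimum is attained, since the identity matrix fits every digraph. -/
noncomputable def minrank : ℕ :=
  sInf {r : ℕ | ∃ A : Matrix V V R, IsFitting E A ∧ A.rank = r}

theorem exists_isFitting_rank_eq_minrank :
    ∃ A : Matrix V V R, IsFitting E A ∧ A.rank = minrank R E := by
  classical
  exact Nat.sInf_mem
    (s := {r : ℕ | ∃ A : Matrix V V R, IsFitting E A ∧ A.rank = r}) ⟨_, 1, isFitting_one, rfl⟩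

variable {R E}

theorem IsFitting.minrank_le {A : Matrix V V R} (hA : IsFitting E A) : minrank R E ≤ A.rank :=
  Nat.sInf_le ⟨A, hA, rfl⟩

theorem minrank_eq_card_iff_forall_rank_eq_card [Nontrivial R] :
    minrank R E = Fintype.card V ↔
      ∀ A : Matrix V V R, IsFitting E A → A.rank = Fintype.card V := by
  constructor
  · intro h A hA
    exact A.rank_le_card_width.antisymm (h ▸ hA.minrank_le)
  · intro h
    obtain ⟨A, hA, hrank⟩ := exists_isFitting_rank_eq_minrank R E
    exact hrank.symm.trans (h A hA)

variable (R E)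

theorem minrk2_eq_n_iff_acyclic_general [IsDomain R] :
    minrank R E = Fintype.card V ↔ ¬∃ c : List V, IsDirectedCycle E c := by
  rw [exists_isDirectedCycle_iff_exists_isSinkless, minrank_eq_card_iff_forall_rank_eq_card]
  constructor
  · rintro hfull ⟨S, hS⟩
    obtain ⟨A, hA, v, hv, hAv⟩ := hS.exists_isFitting_mulVec_eq_zero (R := R)
    exact hv ((rank_eq_card_iff_forall_mulVec_eq_zero A).1 (hfull A hA) v hAv)
  · intro hacyclic A hA
    rw [rank_eq_card_iff_forall_mulVec_eq_zero]
    intro v hAv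
    by_contra hv
    exact hacyclic ⟨_, hA.isSinkless_support hv hAv⟩

end Minrank

/-- `minrk₂(E) = n` if and only if the side-information digraph `E` has no directed cycle. -/
theorem minrk2_eq_n_iff_acyclic
    (n : ℕ) (hn : 1 ≤ n) (E : Fin n → Fin n → Prop) (hirr : ∀ i, ¬E i i) :
    minrk2 E = n ↔ ¬∃ c : List (Fin n), IsDirCycle E c := by
  have h := minrk2_eq_n_iff_acyclic_general (ZMod 2) E
  rwa [Fintype.card_fin] at h
end

section
/- Let E be the side-information digraph on Fin 5 (clients 1,…,5, each wanting its own message) determined by the has-sets H₁ = {2}, H₂ = {3, 4}, H₃ = {1, 4}, H₄ = {1, 5}, H₅ = {2, 3} (i.e., E i j holds exactly for the pairs 1→2; 2→3, 2→4; 3→1, 3→4; 4→1, 4→5; 5→2, 5→3). Then minrk₂(E) = 3; in particular, by the equality of minrk₂ with the minimum linear index code length, the linear code transmitting x₁ + x₂, x₃ + x₅, and x₂ + x₃ + x₄ is a linear index code for E of minimum possible length among linear index codes. -/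
/-- The side-information digraph on 5 clients (0-indexed) given by the has-sets
`H₀ = {1}`, `H₁ = {2, 3}`, `H₂ = {0, 3}`, `H₃ = {0, 4}`, `H₄ = {1, 2}`. -/
def exampleDigraph5 : Fin 5 → Fin 5 → Prop := fun i j =>
  (i = 0 ∧ j = 1) ∨
  (i = 1 ∧ (j = 2 ∨ j = 3)) ∨
  (i = 2 ∧ (j = 0 ∨ j = 3)) ∨
  (i = 3 ∧ (j = 0 ∨ j = 4)) ∨
  (i = 4 ∧ (j = 1 ∨ j = 2))

/-!
Clients of an acyclic set `S` decode one another's messages in topological order, so a word encoding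
`x` supported on `S` determines `x` and the encoder takes at least `2 ^ #S` values. A matrix fitting
the digraph is itself an encoder, taking `2 ^ rank` values, so the bound controls code lengths and
`minrk2` at once. Clients `1, 2, 3` form a transitive tournament, and a fitting matrix that factors
through the three transmitted sums shows that the resulting bound `3` is attained.
-/

open Matrix

section IndexCoding

variable {n ℓ : ℕ} {E : Fin n → Fin n → Prop}

theorem isIndexCode_iff_forall_eq {Enc : (Fin n → ZMod 2) → (Fin ℓ → ZMod 2)} :
    IsIndexCode E Enc ↔
      ∀ i x y, Enc x = Enc y → (∀ j, E i j → x j = y j) → x i = y i := by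
  constructor
  · rintro ⟨Dec, hDec⟩ i x y henc hside
    rw [← hDec x i, ← hDec y i, henc, funext fun j : {j // E i j} => hside j.1 j.2]
  · intro h
    have decoder (i : Fin n) :
        ∃ D : (Fin ℓ → ZMod 2) × ({j // E i j} → ZMod 2) → ZMod 2,
          (fun x : Fin n → ZMod 2 => x i) = D ∘ fun x => (Enc x, fun j => x j.1) := by
      refine (Function.factorsThrough_iff _).mp fun x y hxy => ?_
      obtain ⟨henc, hside⟩ := Prod.mk.inj hxy
      exact h i x y henc fun j hj => congrFun hside ⟨j, hj⟩
    choose D hD using decoder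
    exact ⟨fun i c s => D i (c, s), fun x i => (congrFun (hD i) x).symm⟩

theorem fits_one : Fits E (1 : Matrix (Fin n) (Fin n) (ZMod 2)) :=
  ⟨fun _ => one_apply_eq _, fun _ _ hij _ => one_apply_ne hij⟩

theorem Fits.mulVec_apply_of_forall_eq_zero {A : Matrix (Fin n) (Fin n) (ZMod 2)}
    (hA : Fits E A) {i : Fin n} {z : Fin n → ZMod 2} (hz : ∀ j, E i j → z j = 0) :
    (A *ᵥ z) i = z i := by
  have hoff (j : Fin n) (hji : j ≠ i) : A i j * z j = 0 := by
    by_cases hij : E i j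
    · rw [hz j hij, mul_zero]
    · rw [hA.2 i j hji.symm hij, zero_mul]
  calc (A *ᵥ z) i = ∑ j, A i j * z j := rfl
    _ = A i i * z i := Fintype.sum_eq_single i hoff
    _ = z i := by rw [hA.1 i, one_mul]

theorem Fits.isIndexCode_mulVec {D : Matrix (Fin n) (Fin ℓ) (ZMod 2)}
    {B : Matrix (Fin ℓ) (Fin n) (ZMod 2)} (h : Fits E (D * B)) :
    IsIndexCode E fun x => B *ᵥ x := by
  refine isIndexCode_iff_forall_eq.mpr fun i x y henc hside => sub_eq_zero.mp ?_
  calc x i - y i = ((D * B) *ᵥ (x - y)) i :=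
        (h.mulVec_apply_of_forall_eq_zero fun j hj => sub_eq_zero.mpr (hside j hj)).symm
    _ = (D *ᵥ (B *ᵥ x - B *ᵥ y)) i := by rw [← mulVec_mulVec, mulVec_sub]
    _ = 0 := by rw [henc, sub_self, mulVec_zero, Pi.zero_apply]

theorem minrk2_le_of_fits_mul {D : Matrix (Fin n) (Fin ℓ) (ZMod 2)}
    {B : Matrix (Fin ℓ) (Fin n) (ZMod 2)} (h : Fits E (D * B)) : minrk2 E ≤ ℓ :=
  calc minrk2 E ≤ (D * B).rank := Nat.sInf_le ⟨_, h, rfl⟩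
    _ ≤ D.rank := rank_mul_le_left D B
    _ ≤ ℓ := D.rank_le_width

theorem ncard_range_mulVec {m k : Type*} [Finite m] [Fintype k] {K : Type*} [Field K] [Finite K]
    (A : Matrix m k K) : (Set.range fun x => A *ᵥ x).ncard = Nat.card K ^ A.rank :=
  Module.natCard_eq_pow_finrank (K := K) (V := LinearMap.range A.mulVecLin)

/-- A set of clients is acyclic if it induces a subdigraph without directed cycles, encoded on this
finite vertex set as well-foundedness of the relation "is known by" between its members. -/
def IsAcyclicOn (E : Fin n → Fin n → Prop) (S : Finset (Fin n)) : Prop :=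
  (S : Set (Fin n)).WellFoundedOn fun j i => E i j

variable {S : Finset (Fin n)}

theorem IsIndexCode.injOn_of_isAcyclicOn {Enc : (Fin n → ZMod 2) → (Fin ℓ → ZMod 2)}
    (hEnc : IsIndexCode E Enc) (hS : IsAcyclicOn E S) :
    Set.InjOn Enc {x | ∀ i ∉ S, x i = 0} := by
  intro x hx y hy henc
  have hout (i : Fin n) (hi : i ∉ S) : x i = y i := (hx i hi).trans (hy i hi).symm
  have hin (i : Fin n) (hi : i ∈ S) : x i = y i := by
    refine hS.induction hi fun i _ ih => isIndexCode_iff_forall_eq.mp hEnc i x y henc ?_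
    intro j hij
    by_cases hj : j ∈ S
    · exact ih j hj hij
    · exact hout j hj
  funext i
  by_cases hi : i ∈ S
  · exact hin i hi
  · exact hout i hi

theorem IsIndexCode.two_pow_card_le_ncard_range {Enc : (Fin n → ZMod 2) → (Fin ℓ → ZMod 2)}
    (hEnc : IsIndexCode E Enc) (hS : IsAcyclicOn E S) :
    2 ^ S.card ≤ (Set.range Enc).ncard := by
  let extendByZero (v : S → ZMod 2) : Fin n → ZMod 2 := Function.extend Subtype.val v 0
  have hsupp (v : S → ZMod 2) (i : Fin n) (hi : i ∉ S) : extendByZero v i = 0 :=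
    Function.extend_apply' _ _ _ fun ⟨j, hj⟩ => hi (hj ▸ j.2)
  have hinj : Function.Injective (Enc ∘ extendByZero) := fun v w hvw =>
    Function.extend_injective Subtype.val_injective _
      (hEnc.injOn_of_isAcyclicOn hS (hsupp v) (hsupp w) hvw)
  calc 2 ^ S.card = Nat.card (S → ZMod 2) := by simp
    _ = (Set.range (Enc ∘ extendByZero)).ncard := (Nat.card_range_of_injective hinj).symm
    _ ≤ (Set.range Enc).ncard := Set.ncard_le_ncard (Set.range_comp_subset_range _ _)

theorem IsAcyclicOn.card_le_length (hS : IsAcyclicOn E S) (h : HasIndexCode E ℓ) :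
    S.card ≤ ℓ := by
  obtain ⟨Enc, hEnc⟩ := h
  refine (Nat.pow_le_pow_iff_right one_lt_two).mp ?_
  calc 2 ^ S.card ≤ (Set.range Enc).ncard := hEnc.two_pow_card_le_ncard_range hS
    _ ≤ Nat.card (Fin ℓ → ZMod 2) := Set.ncard_le_card _
    _ = 2 ^ ℓ := by simp

theorem IsAcyclicOn.card_le_rank (hS : IsAcyclicOn E S)
    {A : Matrix (Fin n) (Fin n) (ZMod 2)} (hA : Fits E A) : S.card ≤ A.rank := by
  have hcode : IsIndexCode E fun x => A *ᵥ x :=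
    Fits.isIndexCode_mulVec (D := 1) (by rwa [one_mul])
  refine (Nat.pow_le_pow_iff_right one_lt_two).mp ?_
  calc 2 ^ S.card ≤ (Set.range fun x => A *ᵥ x).ncard := hcode.two_pow_card_le_ncard_range hS
    _ = 2 ^ A.rank := by rw [ncard_range_mulVec, Nat.card_zmod]

theorem IsAcyclicOn.card_le_minrk2 (hS : IsAcyclicOn E S) : S.card ≤ minrk2 E := by
  refine le_csInf ⟨_, 1, fits_one, rfl⟩ ?_
  rintro _ ⟨A, hA, rfl⟩
  exact hS.card_le_rank hA

end IndexCoding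

/-- The matrix of the code transmitting `x₀ + x₁`, `x₂ + x₄` and `x₁ + x₂ + x₃`. -/
def exampleEncoder : Matrix (Fin 3) (Fin 5) (ZMod 2) :=
  !![1, 1, 0, 0, 0;
     0, 0, 1, 0, 1;
     0, 1, 1, 1, 0]

/-- Row `i` selects the transmitted sums that client `i` adds up; side information cancels every
term of the result other than `x i`. -/
def exampleDecoder : Matrix (Fin 5) (Fin 3) (ZMod 2) :=
  !![1, 0, 0;
     0, 0, 1;
     1, 0, 1;
     1, 1, 1;
     0, 1, 0]

theorem exampleEncoder_mulVec (x : Fin 5 → ZMod 2) :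
    exampleEncoder *ᵥ x = ![x 0 + x 1, x 2 + x 4, x 1 + x 2 + x 3] := by
  ext i
  fin_cases i <;> simp [exampleEncoder, mulVec, dotProduct, Fin.sum_univ_five]

theorem fits_exampleDecoder_mul_exampleEncoder :
    Fits exampleDigraph5 (exampleDecoder * exampleEncoder) := by
  unfold Fits exampleDigraph5 exampleDecoder exampleEncoder
  decide

theorem isAcyclicOn_exampleDigraph5 : IsAcyclicOn exampleDigraph5 {1, 2, 3} := by
  have edge_lt : ∀ j ∈ ({1, 2, 3} : Finset (Fin 5)), ∀ i ∈ ({1, 2, 3} : Finset (Fin 5)),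
      exampleDigraph5 i j → j > i := by
    unfold exampleDigraph5
    decide
  exact wellFounded_gt.wellFoundedOn.mono' edge_lt

theorem example5_minrk2_eq_three_general :
    minrk2 exampleDigraph5 = 3 ∧
    IsLinearMap (ZMod 2)
      (fun x : Fin 5 → ZMod 2 => ![x 0 + x 1, x 2 + x 4, x 1 + x 2 + x 3]) ∧
    IsIndexCode exampleDigraph5
      (fun x : Fin 5 → ZMod 2 => ![x 0 + x 1, x 2 + x 4, x 1 + x 2 + x 3]) ∧
    ∀ ℓ : ℕ, HasIndexCode exampleDigraph5 ℓ → 3 ≤ ℓ := by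
  simp only [← exampleEncoder_mulVec]
  have hfits := fits_exampleDecoder_mul_exampleEncoder
  have hacyclic := isAcyclicOn_exampleDigraph5
  exact ⟨le_antisymm (minrk2_le_of_fits_mul hfits) hacyclic.card_le_minrk2,
    exampleEncoder.mulVecLin.isLinear, hfits.isIndexCode_mulVec,
    fun _ => hacyclic.card_le_length⟩

/-- For the 5-client example, `minrk₂ = 3`; the linear code transmitting
`x₀ + x₁`, `x₂ + x₄` and `x₁ + x₂ + x₃` is a linear index code, and (by the equality of
`minrk₂` with the minimum linear index code length) no linear index code is shorter. -/
theorem example5_minrk2_eq_three :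
    minrk2 exampleDigraph5 = 3 ∧
    IsLinearMap (ZMod 2)
      (fun x : Fin 5 → ZMod 2 => ![x 0 + x 1, x 2 + x 4, x 1 + x 2 + x 3]) ∧
    IsIndexCode exampleDigraph5
      (fun x : Fin 5 → ZMod 2 => ![x 0 + x 1, x 2 + x 4, x 1 + x 2 + x 3]) ∧
    ∀ ℓ : ℕ, HasLinearIndexCode exampleDigraph5 ℓ → 3 ≤ ℓ := by
  obtain ⟨hminrk, hlinear, hcode, hlength⟩ := example5_minrk2_eq_three_general
  exact ⟨hminrk, hlinear, hcode, fun ℓ ⟨Enc, _, hEnc⟩ => hlength ℓ ⟨Enc, hEnc⟩⟩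
end
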